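/- arXiv:1908.00241 — 10 statements merged into one kernel-verified Lean document; each statement's English description precedes it below -/
import Mathlib

section
/- Let n ≥ 1, let A, B ⊆ ℤⁿ be nonempty finite sets with coefficient functions v : A → ℝ and u : B → ℝ, and let f(x) = max_{a∈A}(v(a) + ⟨a,x⟩) and g(x) = max_{b∈B}(u(b) + ⟨b,x⟩) be the associated tropical polynomial functions on ℝⁿ. Then there exists a tropical polynomial function h, i.e. a nonempty finite set C ⊆ ℤⁿ and a function w : C → ℝ with h(x) = max_{c∈C}(w(c) + ⟨c,x⟩), such that f(x) = g(x) + h(x) for all x ∈ ℝⁿ, if and only if the function x ↦ f(x) − g(x) is convex on ℝⁿ. -/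
/-- A finite maximum of affine functions with integer slopes is continuous. -/
theorem continuous_sup'_affine {n : ℕ} (C : Finset (Fin n → ℤ)) (hC : C.Nonempty)
    (w : (Fin n → ℤ) → ℝ) :
    Continuous fun x : Fin n → ℝ => C.sup' hC (fun c => w c + ∑ i, (c i : ℝ) * x i) :=
  Continuous.finset_sup'_apply hC fun _ _ => by fun_prop

/-- A finite maximum of affine functions with integer slopes is convex. -/
theorem convexOn_sup'_affine {n : ℕ} (C : Finset (Fin n → ℤ)) (hC : C.Nonempty)
    (w : (Fin n → ℤ) → ℝ) :
    ConvexOn ℝ Set.univ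
      fun x : Fin n → ℝ => C.sup' hC (fun c => w c + ∑ i, (c i : ℝ) * x i) := by
  refine ⟨convex_univ, fun x _ y _ a b ha hb hab => Finset.sup'_le _ _ fun c hc => ?_⟩
  have hx := Finset.le_sup' (fun c : Fin n → ℤ => w c + ∑ i, (c i : ℝ) * x i) hc
  have hy := Finset.le_sup' (fun c : Fin n → ℤ => w c + ∑ i, (c i : ℝ) * y i) hc
  have hsum : ∑ i, (c i : ℝ) * (a • x + b • y) i
      = a * ∑ i, (c i : ℝ) * x i + b * ∑ i, (c i : ℝ) * y i := by
    rw [Finset.mul_sum, Finset.mul_sum, ← Finset.sum_add_distrib]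
    refine Finset.sum_congr rfl fun i _ => ?_
    simp only [Pi.add_apply, Pi.smul_apply, smul_eq_mul]
    ring
  have hw : w c = a * w c + b * w c := by rw [← add_mul, hab, one_mul]
  rw [hsum, smul_eq_mul, smul_eq_mul]
  linarith [mul_le_mul_of_nonneg_left hx ha, mul_le_mul_of_nonneg_left hy hb]

/-- A convex function lies above every affine function it agrees with on a set with nonempty
interior. -/
theorem ConvexOn.affine_le_of_interior_nonempty {n : ℕ} {h : (Fin n → ℝ) → ℝ}
    (hconv : ConvexOn ℝ Set.univ h) (c : Fin n → ℤ) (k : ℝ)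
    (hint : (interior {x | h x = k + ∑ i, (c i : ℝ) * x i}).Nonempty) (x : Fin n → ℝ) :
    k + ∑ i, (c i : ℝ) * x i ≤ h x := by
  obtain ⟨z, hz⟩ := hint
  let L : (Fin n → ℝ) →ₗ[ℝ] ℝ := ∑ i, (c i : ℝ) • LinearMap.proj i
  have hL (y : Fin n → ℝ) : L y = ∑ i, (c i : ℝ) * y i := by simp [L]
  have hcv : ConvexOn ℝ Set.univ (h - ⇑L) := hconv.sub (L.concaveOn convex_univ)
  have hzk : h z = k + ∑ i, (c i : ℝ) * z i :=
    (interior_subset hz : z ∈ {x | h x = k + ∑ i, (c i : ℝ) * x i})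
  have hmin : IsLocalMin (h - ⇑L) z := by
    filter_upwards [mem_interior_iff_mem_nhds.1 hz] with y hy
    have hyk : h y = k + ∑ i, (c i : ℝ) * y i := hy
    simp [hL, hyk, hzk]
  have hle := IsMinOn.of_isLocalMin_of_convex_univ hmin hcv x
  simp only [Pi.sub_apply, hL, hzk] at hle
  linarith

/-- A continuous convex function that agrees at every point with one of finitely many affine
functions with integer slopes is a maximum of such functions. -/
theorem ConvexOn.exists_eq_sup'_affine {n : ℕ} {h : (Fin n → ℝ) → ℝ}
    (hconv : ConvexOn ℝ Set.univ h) (hcont : Continuous h) (T : Finset ((Fin n → ℤ) × ℝ))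
    (hT : ∀ x, ∃ p ∈ T, h x = p.2 + ∑ i, (p.1 i : ℝ) * x i) :
    ∃ (C : Finset (Fin n → ℤ)) (hC : C.Nonempty) (w : (Fin n → ℤ) → ℝ),
      ∀ x, h x = C.sup' hC (fun c => w c + ∑ i, (c i : ℝ) * x i) := by
  classical
  let P (p : (Fin n → ℤ) × ℝ) : Set (Fin n → ℝ) := {x | h x = p.2 + ∑ i, (p.1 i : ℝ) * x i}
  have hdense : Dense (⋃ p : T, interior (P p)) := by
    refine dense_iUnion_interior_of_closed (fun p => isClosed_eq hcont (by fun_prop)) ?_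
    refine Set.eq_univ_of_forall fun x => ?_
    obtain ⟨p, hp, hx⟩ := hT x
    exact Set.mem_iUnion.2 ⟨⟨p, hp⟩, hx⟩
  let S := T.filter fun p => (interior (P p)).Nonempty
  have hS (p) (hp : p ∈ S) : (interior (P p)).Nonempty := (Finset.mem_filter.1 hp).2
  have hC : (S.image Prod.fst).Nonempty := by
    obtain ⟨x, hx⟩ := hdense.nonempty
    obtain ⟨p, hp⟩ := Set.mem_iUnion.1 hx
    exact ⟨p.1.1, Finset.mem_image_of_mem _ (Finset.mem_filter.2 ⟨p.2, x, hp⟩)⟩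
  have hk (c : Fin n → ℤ) : ∃ k : ℝ, c ∈ S.image Prod.fst → (c, k) ∈ S := by
    by_cases hc : c ∈ S.image Prod.fst
    · obtain ⟨⟨c', k⟩, hp, rfl⟩ := Finset.mem_image.1 hc
      exact ⟨k, fun _ => hp⟩
    · exact ⟨0, fun hc' => absurd hc' hc⟩
  choose w hw using hk
  have hwle (c) (hc : c ∈ S.image Prod.fst) (x : Fin n → ℝ) :
      w c + ∑ i, (c i : ℝ) * x i ≤ h x :=
    hconv.affine_le_of_interior_nonempty c (w c) (hS _ (hw c hc)) x
  refine ⟨S.image Prod.fst, hC, w, fun x => le_antisymm ?_ (Finset.sup'_le _ _ fun c hc =>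
    hwle c hc x)⟩
  have hclosed := isClosed_le hcont (continuous_sup'_affine (S.image Prod.fst) hC w)
  refine hclosed.closure_subset_iff.2 ?_ (hdense x)
  intro y hy
  obtain ⟨p, hp⟩ := Set.mem_iUnion.1 hy
  have hpS : p.1 ∈ S := Finset.mem_filter.2 ⟨p.2, y, hp⟩
  have hpC : p.1.1 ∈ S.image Prod.fst := Finset.mem_image_of_mem _ hpS
  have hyp : h y = p.1.2 + ∑ i, (p.1.1 i : ℝ) * y i := (interior_subset hp : y ∈ P p.1)
  obtain ⟨z, hz⟩ := hS _ (hw _ hpC)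
  have hzw : h z = w p.1.1 + ∑ i, (p.1.1 i : ℝ) * z i := (interior_subset hz : z ∈ P (p.1.1, w p.1.1))
  have hzp := hconv.affine_le_of_interior_nonempty p.1.1 p.1.2 (hS _ hpS) z
  have hsup := Finset.le_sup' (fun c : Fin n → ℤ => w c + ∑ i, (c i : ℝ) * y i) hpC
  refine le_trans ?_ hsup
  linarith

/-- The tropical division problem `f = g ⊙ h` has a solution `h`
(a tropical polynomial function) if and only if `f - g` is convex on ℝⁿ. -/
theorem tropical_division_iff_convex (n : ℕ) (hn : 1 ≤ n)
    (A B : Finset (Fin n → ℤ)) (hA : A.Nonempty) (hB : B.Nonempty)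
    (v u : (Fin n → ℤ) → ℝ)
    (f g : (Fin n → ℝ) → ℝ)
    (hf : ∀ x, f x = A.sup' hA (fun a => v a + ∑ i, (a i : ℝ) * x i))
    (hg : ∀ x, g x = B.sup' hB (fun b => u b + ∑ i, (b i : ℝ) * x i)) :
    (∃ (C : Finset (Fin n → ℤ)) (hC : C.Nonempty) (w : (Fin n → ℤ) → ℝ),
        ∀ x, f x = g x + C.sup' hC (fun c => w c + ∑ i, (c i : ℝ) * x i)) ↔
    ConvexOn ℝ Set.univ (fun x => f x - g x) := by
  constructor
  · rintro ⟨C, hC, w, h⟩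
    simpa only [h, add_sub_cancel_left] using convexOn_sup'_affine C hC w
  · intro hconv
    have hfc : Continuous f := (continuous_sup'_affine A hA v).congr fun x => (hf x).symm
    have hgc : Continuous g := (continuous_sup'_affine B hB u).congr fun x => (hg x).symm
    obtain ⟨C, hC, w, h⟩ := hconv.exists_eq_sup'_affine (hfc.sub hgc)
      ((A ×ˢ B).image fun p => (p.1 - p.2, v p.1 - u p.2)) fun x => by
        obtain ⟨a, ha, hfa⟩ :=
          A.exists_mem_eq_sup' hA (fun a => v a + ∑ i, (a i : ℝ) * x i)
        obtain ⟨b, hb, hgb⟩ :=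
          B.exists_mem_eq_sup' hB (fun b => u b + ∑ i, (b i : ℝ) * x i)
        refine ⟨_, Finset.mem_image_of_mem _ (Finset.mk_mem_product ha hb), ?_⟩
        simp only [hf, hg, hfa, hgb, Pi.sub_apply, Int.cast_sub, sub_mul, Finset.sum_sub_distrib]
        ring
    exact ⟨C, hC, w, fun x => by rw [← h x]; ring⟩
end

section
/- Let n ≥ 1 and let g, h : ℝⁿ → ℝ be convex functions. Then the set of points where g + h fails to be differentiable equals the union of the set of points where g fails to be differentiable and the set of points where h fails to be differentiable; that is, {x ∈ ℝⁿ : g + h is not differentiable at x} = {x : g is not differentiable at x} ∪ {x : h is not differentiable at x}. -/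
/-- A continuous convex function has a subgradient at every point. -/
theorem ConvexOn.exists_subgradient {E : Type*} [NormedAddCommGroup E] [NormedSpace ℝ E]
    {g : E → ℝ} (hg : ConvexOn ℝ Set.univ g) (hc : Continuous g) (x : E) :
    ∃ l : E →L[ℝ] ℝ, ∀ y, g x + l (y - x) ≤ g y := by
  have hopen : IsOpen {p : E × ℝ | p.1 ∈ Set.univ ∧ g p.1 < p.2} := by
    simpa using isOpen_lt (hc.comp continuous_fst) continuous_snd
  obtain ⟨F, hF⟩ := geometric_hahn_banach_open_point (x := (x, g x)) hg.convex_strict_epigraph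
    hopen (by simp)
  have hsplit : ∀ (y : E) (t : ℝ), F (y, t) = F (y, 0) + t * F (0, 1) := fun y t => by
    rw [← smul_eq_mul, ← map_smul, ← map_add]
    simp
  have hneg : F (0, 1) < 0 := by
    have h1 := hF (x, g x + 1) (by simp)
    rw [hsplit x (g x + 1), hsplit x (g x)] at h1
    linarith
  refine ⟨(-F (0, 1))⁻¹ • F.comp (ContinuousLinearMap.inl ℝ E ℝ), fun y => ?_⟩
  refine le_of_forall_pos_lt_add fun ε hε => ?_
  have h1 := hF (y, g y + ε) (by simpa using hε)
  rw [hsplit y, hsplit x] at h1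
  have h2 : F (y - x, 0) = F (y, 0) - F (x, 0) := by
    rw [← map_sub]
    simp
  have h3 : (-F (0, 1))⁻¹ * F (y - x, 0) < g y + ε - g x := by
    rw [inv_mul_lt_iff₀ (by linarith), h2]
    linarith
  simp only [smul_apply, ContinuousLinearMap.comp_apply,
    ContinuousLinearMap.inl_apply, smul_eq_mul]
  linarith

/-- If the sum of two continuous convex functions is differentiable at a point, then so is the
first summand. -/
theorem ConvexOn.differentiableAt_of_add {E : Type*} [NormedAddCommGroup E] [NormedSpace ℝ E]
    {g h : E → ℝ} (hg : ConvexOn ℝ Set.univ g) (hh : ConvexOn ℝ Set.univ h)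
    (hgc : Continuous g) (hhc : Continuous h) {x : E}
    (hd : DifferentiableAt ℝ (fun y => g y + h y) x) : DifferentiableAt ℝ g x := by
  obtain ⟨l, hl⟩ := hg.exists_subgradient hgc x
  obtain ⟨m, hm⟩ := hh.exists_subgradient hhc x
  have hr := hd.hasFDerivAt.sub (l + m).hasFDerivAt
  have hmin : IsLocalMin ((fun y => g y + h y) - ⇑(l + m)) x := by
    refine Filter.Eventually.of_forall fun y => ?_
    have h1 := hl y
    have h2 := hm y
    simp only [map_sub] at h1 h2
    simp only [Pi.sub_apply, add_apply]
    linarith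
  have hf' := sub_eq_zero.mp (hmin.hasFDerivAt_eq_zero hr)
  have hfd := hd.hasFDerivAt
  rw [hf', hasFDerivAt_iff_isLittleO] at hfd
  refine HasFDerivAt.differentiableAt (f' := l) ?_
  rw [hasFDerivAt_iff_isLittleO]
  refine (Asymptotics.IsBigO.of_bound 1 (Filter.Eventually.of_forall fun y => ?_)).trans_isLittleO
    hfd
  have h1 := hl y
  have h2 := hm y
  rw [add_apply, Real.norm_of_nonneg (by linarith),
    Real.norm_of_nonneg (by linarith)]
  linarith

/-- For convex functions `g, h : ℝⁿ → ℝ`, the set of points of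
non-differentiability of `g + h` is the union of the sets of points of
non-differentiability of `g` and of `h`. -/
theorem nondiff_add_convex (n : ℕ) (hn : 1 ≤ n) (g h : (Fin n → ℝ) → ℝ)
    (hg : ConvexOn ℝ Set.univ g) (hh : ConvexOn ℝ Set.univ h) :
    {x : Fin n → ℝ | ¬ DifferentiableAt ℝ (fun y => g y + h y) x} =
      {x : Fin n → ℝ | ¬ DifferentiableAt ℝ g x} ∪
        {x : Fin n → ℝ | ¬ DifferentiableAt ℝ h x} := by
  have hgc : Continuous g := continuousOn_univ.mp (hg.continuousOn isOpen_univ)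
  have hhc : Continuous h := continuousOn_univ.mp (hh.continuousOn isOpen_univ)
  ext x
  simp only [Set.mem_ofPred_eq, Set.mem_union, ← not_and_or, not_iff_not]
  refine ⟨fun hd => ⟨hg.differentiableAt_of_add hh hgc hhc hd,
    hh.differentiableAt_of_add hg hhc hgc ?_⟩, fun hd => hd.1.add hd.2⟩
  simpa only [add_comm] using hd
end

section
/- Let n ≥ 1, let S, T ⊆ ℤⁿ be nonempty finite sets, and let P = conv(S) and Q = conv(T) be the associated lattice polytopes in ℝⁿ. Then there exists a lattice polytope R (the convex hull of a nonempty finite subset of ℤⁿ) such that P = Q + R (Minkowski sum) if and only if the function x ↦ max_{s∈S}⟨s,x⟩ − max_{t∈T}⟨t,x⟩ is convex on ℝⁿ. -/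
open Pointwise

/-- The canonical embedding of `ℤⁿ` into `ℝⁿ`. -/
def intToReal {n : ℕ} (a : Fin n → ℤ) : Fin n → ℝ := fun i => (a i : ℝ)

/-- A lattice polytope in `ℝⁿ` is the convex hull of a nonempty finite subset of `ℤⁿ`. -/
def IsLatticePolytope {n : ℕ} (P : Set (Fin n → ℝ)) : Prop :=
  ∃ S : Finset (Fin n → ℤ), S.Nonempty ∧ P = convexHull ℝ (intToReal '' ↑S)

namespace LatticePolytope

variable {n : ℕ}

/-- The tropical polynomial function `x ↦ max_{s ∈ S} ⟨s, x⟩`. -/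
noncomputable def supportFun (S : Finset (Fin n → ℤ)) (hS : S.Nonempty) (x : Fin n → ℝ) : ℝ :=
  S.sup' hS fun s => ∑ i, (s i : ℝ) * x i

/-- The linear form `x ↦ ⟨a, x⟩`. -/
def pairing (a : Fin n → ℤ) : (Fin n → ℝ) →ₗ[ℝ] ℝ where
  toFun x := ∑ i, (a i : ℝ) * x i
  map_add' x y := by simp [mul_add, Finset.sum_add_distrib]
  map_smul' c x := by simp [Finset.mul_sum, mul_left_comm]

lemma pairing_apply (a : Fin n → ℤ) (x : Fin n → ℝ) : pairing a x = ∑ i, (a i : ℝ) * x i := rfl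

lemma pairing_add (a b : Fin n → ℤ) (x : Fin n → ℝ) :
    pairing (a + b) x = pairing a x + pairing b x := by
  simp [pairing_apply, add_mul, Finset.sum_add_distrib]

lemma pairing_sub (a b : Fin n → ℤ) (x : Fin n → ℝ) :
    pairing (a - b) x = pairing a x - pairing b x := by
  simp [pairing_apply, sub_mul, Finset.sum_sub_distrib]

lemma continuous_pairing (a : Fin n → ℤ) : Continuous (pairing a) :=
  LinearMap.continuous_of_finiteDimensional _

lemma pairing_le_supportFun {S : Finset (Fin n → ℤ)} (hS : S.Nonempty) {s : Fin n → ℤ}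
    (hs : s ∈ S) (x : Fin n → ℝ) : pairing s x ≤ supportFun S hS x :=
  Finset.le_sup' (fun s => pairing s x) hs

lemma supportFun_le_iff {S : Finset (Fin n → ℤ)} (hS : S.Nonempty) {x : Fin n → ℝ} {c : ℝ} :
    supportFun S hS x ≤ c ↔ ∀ s ∈ S, pairing s x ≤ c :=
  Finset.sup'_le_iff hS _

lemma exists_supportFun_eq {S : Finset (Fin n → ℤ)} (hS : S.Nonempty) (x : Fin n → ℝ) :
    ∃ s ∈ S, supportFun S hS x = pairing s x :=
  Finset.exists_mem_eq_sup' hS _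

lemma continuous_supportFun {S : Finset (Fin n → ℤ)} (hS : S.Nonempty) :
    Continuous (supportFun S hS) :=
  Continuous.finset_sup'_apply hS fun s _ => continuous_pairing s

lemma convexOn_supportFun {S : Finset (Fin n → ℤ)} (hS : S.Nonempty) :
    ConvexOn ℝ Set.univ (supportFun S hS) := by
  refine ⟨convex_univ, fun x _ y _ a b ha hb _ => (supportFun_le_iff hS).2 fun s hs => ?_⟩
  rw [map_add, map_smul, map_smul]
  exact add_le_add (smul_le_smul_of_nonneg_left (pairing_le_supportFun hS hs x) ha)
    (smul_le_smul_of_nonneg_left (pairing_le_supportFun hS hs y) hb)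

lemma supportFun_add {T U : Finset (Fin n → ℤ)} (hT : T.Nonempty) (hU : U.Nonempty)
    (x : Fin n → ℝ) :
    supportFun (T + U) (hT.add hU) x = supportFun T hT x + supportFun U hU x := by
  apply le_antisymm
  · refine (supportFun_le_iff _).2 fun s hs => ?_
    obtain ⟨t, ht, u, hu, rfl⟩ := Finset.mem_add.1 hs
    rw [pairing_add]
    exact add_le_add (pairing_le_supportFun hT ht x) (pairing_le_supportFun hU hu x)
  · obtain ⟨t, ht, htx⟩ := exists_supportFun_eq hT x
    obtain ⟨u, hu, hux⟩ := exists_supportFun_eq hU x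
    rw [htx, hux, ← pairing_add]
    exact pairing_le_supportFun _ (Finset.add_mem_add ht hu) x

/-- A lattice polytope is cut out by the inequalities given by its support function. -/
lemma mem_convexHull_iff_forall_le_supportFun {S : Finset (Fin n → ℤ)} (hS : S.Nonempty)
    (p : Fin n → ℝ) :
    p ∈ convexHull ℝ (intToReal '' (S : Set (Fin n → ℤ))) ↔
      ∀ x, ∑ i, p i * x i ≤ supportFun S hS x := by
  constructor
  · intro hp x
    have hlin : IsLinearMap ℝ fun q : Fin n → ℝ => ∑ i, q i * x i :=
      ⟨fun q r => by simp [add_mul, Finset.sum_add_distrib],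
        fun c q => by simp [Finset.mul_sum, mul_assoc]⟩
    have hsub : convexHull ℝ (intToReal '' (S : Set (Fin n → ℤ))) ⊆
        {q | ∑ i, q i * x i ≤ supportFun S hS x} := by
      refine convexHull_min ?_ (convex_halfSpace_le hlin _)
      rintro _ ⟨s, hs, rfl⟩
      exact pairing_le_supportFun hS hs x
    exact hsub hp
  · intro h
    by_contra hp
    have hclosed : IsClosed (convexHull ℝ (intToReal '' (S : Set (Fin n → ℤ)))) :=
      (S.finite_toSet.image _).isClosed_convexHull ℝ
    obtain ⟨f, c, hlt, hc⟩ :=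
      geometric_hahn_banach_closed_point (convex_convexHull ℝ _) hclosed hp
    have hf (q : Fin n → ℝ) : f q = ∑ i, q i * f (Pi.single i 1) := by
      conv_lhs => rw [pi_eq_sum_univ' q]
      simp
    obtain ⟨s, hs, hsx⟩ := exists_supportFun_eq hS fun i => f (Pi.single i 1)
    have hle := h fun i => f (Pi.single i 1)
    rw [hsx, ← hf] at hle
    have hs' := hlt _ (subset_convexHull ℝ _ (Set.mem_image_of_mem intToReal hs))
    rw [hf] at hs'
    exact (hc.trans_le hle).not_gt hs'

lemma convexHull_eq_iff_supportFun_eq {S S' : Finset (Fin n → ℤ)} (hS : S.Nonempty)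
    (hS' : S'.Nonempty) :
    convexHull ℝ (intToReal '' (S : Set (Fin n → ℤ))) =
        convexHull ℝ (intToReal '' (S' : Set (Fin n → ℤ))) ↔
      supportFun S hS = supportFun S' hS' := by
  constructor
  · intro h
    funext x
    apply le_antisymm
    · exact (supportFun_le_iff hS).2 fun s hs =>
        (mem_convexHull_iff_forall_le_supportFun hS' _).1
          (h ▸ subset_convexHull ℝ _ (Set.mem_image_of_mem intToReal hs)) x
    · exact (supportFun_le_iff hS').2 fun s hs =>
        (mem_convexHull_iff_forall_le_supportFun hS _).1
          (h ▸ subset_convexHull ℝ _ (Set.mem_image_of_mem intToReal hs)) x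
  · intro h
    ext p
    rw [mem_convexHull_iff_forall_le_supportFun hS, mem_convexHull_iff_forall_le_supportFun hS', h]

lemma convexHull_image_add (T U : Finset (Fin n → ℤ)) :
    convexHull ℝ (intToReal '' ((T + U : Finset (Fin n → ℤ)) : Set (Fin n → ℤ))) =
      convexHull ℝ (intToReal '' (T : Set (Fin n → ℤ))) +
        convexHull ℝ (intToReal '' (U : Set (Fin n → ℤ))) := by
  rw [← convexHull_add, Finset.coe_add]
  congr 1
  exact Set.image_add ((Int.castAddHom ℝ).compLeft (Fin n))

lemma dense_pairing_ne_zero {a : Fin n → ℤ} (ha : a ≠ 0) : Dense {x | pairing a x ≠ 0} := by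
  have hker : (LinearMap.ker (pairing a) : Set (Fin n → ℝ))ᶜ = {x | pairing a x ≠ 0} := by
    ext x
    simp
  rw [← hker, ← interior_eq_empty_iff_dense_compl, ← Set.not_nonempty_iff_eq_empty]
  intro hne
  have htop := Submodule.eq_top_of_nonempty_interior' _ hne
  obtain ⟨i, hi⟩ := Function.ne_iff.1 ha
  have hmem : Pi.single i (1 : ℝ) ∈ LinearMap.ker (pairing a) := htop ▸ Submodule.mem_top
  apply hi
  simpa [pairing_apply, Pi.single_apply] using hmem

/-- Generic directions separate the points of a finite set of lattice points. -/
lemma dense_injOn_pairing (S : Finset (Fin n → ℤ)) :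
    Dense {x : Fin n → ℝ | Set.InjOn (fun s => pairing s x) (S : Set (Fin n → ℤ))} := by
  have hdense : Dense (⋂ a ∈ ((S - S).erase 0 : Set (Fin n → ℤ)), {x | pairing a x ≠ 0}) :=
    dense_biInter_of_isOpen
      (fun a _ => isOpen_ne_fun (continuous_pairing a) continuous_const)
      (Finset.countable_toSet _)
      (fun a ha => dense_pairing_ne_zero (Finset.ne_of_mem_erase ha))
  refine hdense.mono fun x hx s hs s' hs' h => ?_
  by_contra hne
  have hmem : s - s' ∈ (((S - S).erase 0 : Finset (Fin n → ℤ)) : Set (Fin n → ℤ)) :=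
    Finset.mem_erase.2 ⟨sub_ne_zero.2 hne, Finset.sub_mem_sub hs hs'⟩
  exact Set.mem_iInter₂.1 hx _ hmem (by rw [pairing_sub]; exact sub_eq_zero.2 h)

/-- Where the maximum is attained only once, the support function is locally linear. -/
lemma eventually_supportFun_eq {S : Finset (Fin n → ℤ)} (hS : S.Nonempty) {y : Fin n → ℝ}
    (hy : Set.InjOn (fun s => pairing s y) (S : Set (Fin n → ℤ))) :
    ∃ s ∈ S, ∀ᶠ z in nhds y, supportFun S hS z = pairing s z := by
  obtain ⟨s, hs, hsy⟩ := exists_supportFun_eq hS y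
  refine ⟨s, hs, ?_⟩
  have hev : ∀ᶠ z in nhds y, ∀ s' ∈ S, pairing s' z ≤ pairing s z := by
    refine (Filter.eventually_all_finset S).2 fun s' hs' => ?_
    rcases eq_or_ne s' s with rfl | hne
    · exact Filter.Eventually.of_forall fun _ => le_rfl
    · have hlt : pairing s' y < pairing s y :=
        lt_of_le_of_ne (hsy ▸ pairing_le_supportFun hS hs' y) fun h => hne (hy hs' hs h)
      exact ((continuous_pairing s').continuousAt.eventually_lt
        (continuous_pairing s).continuousAt hlt).mono fun _ => le_of_lt
  exact hev.mono fun z hz =>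
    le_antisymm ((supportFun_le_iff hS).2 hz) (pairing_le_supportFun hS hs z)

/-- A convex function which agrees with a linear form near a point lies above it everywhere. -/
lemma le_of_convexOn_of_eventuallyEq {E : Type*} [AddCommGroup E] [Module ℝ E]
    [TopologicalSpace E] [IsTopologicalAddGroup E] [ContinuousSMul ℝ E]
    {g : E → ℝ} (hg : ConvexOn ℝ Set.univ g) (l : E →ₗ[ℝ] ℝ) {y : E}
    (h : ∀ᶠ z in nhds y, g z = l z) (z : E) : l z ≤ g z := by
  have hloc : IsLocalMin (g - ⇑l) y := by
    filter_upwards [h] with w hw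
    simp [hw, h.self_of_nhds]
  have hmin := IsMinOn.of_isLocalMin_of_convex_univ hloc (hg.sub (l.concaveOn convex_univ)) z
  simpa [h.self_of_nhds] using hmin

/-- A convex difference of support functions is a support function. -/
lemma exists_supportFun_eq_add_of_convexOn {S T : Finset (Fin n → ℤ)} (hS : S.Nonempty)
    (hT : T.Nonempty)
    (hconv : ConvexOn ℝ Set.univ fun x => supportFun S hS x - supportFun T hT x) :
    ∃ (U : Finset (Fin n → ℤ)) (hU : U.Nonempty),
      ∀ x, supportFun S hS x = supportFun T hT x + supportFun U hU x := by
  classical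
  set g : (Fin n → ℝ) → ℝ := fun x => supportFun S hS x - supportFun T hT x with hg
  let U : Finset (Fin n → ℤ) := (S - T).filter fun u => ∀ x, pairing u x ≤ g x
  have hattained {y : Fin n → ℝ}
      (hy : Set.InjOn (fun s => pairing s y) ((S ∪ T : Finset _) : Set (Fin n → ℤ))) :
      ∃ u ∈ U, g y = pairing u y := by
    obtain ⟨s, hs, hsy⟩ := eventually_supportFun_eq hS
      (hy.mono (Finset.coe_subset.2 Finset.subset_union_left))
    obtain ⟨t, ht, hty⟩ := eventually_supportFun_eq hT
      (hy.mono (Finset.coe_subset.2 Finset.subset_union_right))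
    have hev : ∀ᶠ z in nhds y, g z = pairing (s - t) z := by
      filter_upwards [hsy, hty] with z hsz htz
      rw [pairing_sub, hg, ← hsz, ← htz]
    exact ⟨s - t, Finset.mem_filter.2
      ⟨Finset.sub_mem_sub hs ht, le_of_convexOn_of_eventuallyEq hconv _ hev⟩, hev.self_of_nhds⟩
  have hdense := dense_injOn_pairing (S ∪ T)
  have hU : U.Nonempty := by
    obtain ⟨y, hy⟩ := hdense.nonempty
    obtain ⟨u, hu, -⟩ := hattained hy
    exact ⟨u, hu⟩
  refine ⟨U, hU, fun x => ?_⟩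
  have hgU : g = supportFun U hU := by
    refine Continuous.ext_on hdense ((continuous_supportFun hS).sub (continuous_supportFun hT))
      (continuous_supportFun hU) fun y hy => ?_
    obtain ⟨u, hu, huy⟩ := hattained hy
    exact le_antisymm (huy ▸ pairing_le_supportFun hU hu y)
      ((supportFun_le_iff hU).2 fun v hv => (Finset.mem_filter.1 hv).2 y)
  rw [← hgU, hg]
  ring

end LatticePolytope

open LatticePolytope

/-- For lattice polytopes `P = conv S`, `Q = conv T`, there is a lattice
polytope `R` with `P = Q + R` (Minkowski sum) iff `x ↦ max_{s∈S}⟨s,x⟩ − max_{t∈T}⟨t,x⟩`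
is convex on ℝⁿ. -/
theorem minkowski_factorization_iff_convex (n : ℕ) (hn : 1 ≤ n)
    (S T : Finset (Fin n → ℤ)) (hS : S.Nonempty) (hT : T.Nonempty)
    (P Q : Set (Fin n → ℝ))
    (hP : P = convexHull ℝ (intToReal '' ↑S))
    (hQ : Q = convexHull ℝ (intToReal '' ↑T)) :
    (∃ R : Set (Fin n → ℝ), IsLatticePolytope R ∧ P = Q + R) ↔
    ConvexOn ℝ Set.univ (fun x : Fin n → ℝ =>
      (S.sup' hS fun s => ∑ i, (s i : ℝ) * x i) -
        (T.sup' hT fun t => ∑ i, (t i : ℝ) * x i)) := by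
  subst hP hQ
  change _ ↔ ConvexOn ℝ Set.univ fun x => supportFun S hS x - supportFun T hT x
  constructor
  · rintro ⟨_, ⟨U, hU, rfl⟩, h⟩
    rw [← convexHull_image_add, convexHull_eq_iff_supportFun_eq hS (hT.add hU)] at h
    simpa [h, supportFun_add hT hU] using convexOn_supportFun hU
  · intro hconv
    obtain ⟨U, hU, h⟩ := exists_supportFun_eq_add_of_convexOn hS hT hconv
    refine ⟨_, ⟨U, hU, rfl⟩, ?_⟩
    rw [← convexHull_image_add, convexHull_eq_iff_supportFun_eq hS (hT.add hU)]
    exact funext fun x => (h x).trans (supportFun_add hT hU x).symm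
end

section
/- Let A, B, C ⊆ ℝⁿ be nonempty compact convex sets. If A + B = A + C (Minkowski sum), then B = C. -/
open Pointwise

/-- Order cancellation for Minkowski addition: a nonempty compact summand can be cancelled from an
inclusion whose right-hand side has a closed convex second summand. -/
theorem subset_of_add_subset_add_left {E : Type*} [AddCommGroup E] [Module ℝ E]
    [TopologicalSpace E] [IsTopologicalAddGroup E] [ContinuousSMul ℝ E] [LocallyConvexSpace ℝ E]
    {A B C : Set E} (hA : A.Nonempty) (hAc : IsCompact A) (hC : IsClosed C) (hCv : Convex ℝ C)
    (h : A + B ⊆ A + C) : B ⊆ C := by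
  intro b hb
  by_contra hbC
  obtain ⟨f, u, hfC, hfb⟩ := geometric_hahn_banach_closed_point hCv hC hbC
  obtain ⟨a, ha, hmax⟩ := hAc.exists_isMaxOn hA f.continuous.continuousOn
  obtain ⟨a', ha', c, hc, hac⟩ := h (Set.add_mem_add ha hb)
  have hsum : f a' + f c = f a + f b := by
    rw [← map_add, ← map_add]
    exact congrArg f hac
  have hle : f a' ≤ f a := hmax ha'
  linarith [hfC c hc]

/-- Minkowski addition of nonempty compact convex sets is cancellative. -/
theorem minkowski_cancellation (n : ℕ) (A B C : Set (Fin n → ℝ))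
    (hA : A.Nonempty) (hB : B.Nonempty) (hC : C.Nonempty)
    (hAc : IsCompact A) (hBc : IsCompact B) (hCc : IsCompact C)
    (hAv : Convex ℝ A) (hBv : Convex ℝ B) (hCv : Convex ℝ C)
    (h : A + B = A + C) : B = C :=
  (subset_of_add_subset_add_left hA hAc hCc.isClosed hCv h.subset).antisymm
    (subset_of_add_subset_add_left hA hAc hBc.isClosed hBv h.superset)
end

section
/- Let P and Q be polytopes in ℝⁿ, i.e. convex hulls of nonempty finite sets. Then the number of extreme points of P is at most the number of extreme points of the Minkowski sum P + Q. -/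
open Pointwise

section

variable {E : Type*} [AddCommGroup E] [Module ℝ E]

/-- An extreme point of a Minkowski sum has a unique decomposition. -/
theorem Set.extremePoints_add_left_unique {A B : Set E} {p p' q q' : E}
    (hp : p ∈ A) (hp' : p' ∈ A) (hq : q ∈ B) (hq' : q' ∈ B)
    (hz : p + q ∈ Set.extremePoints ℝ (A + B)) (h : p + q = p' + q') : p = p' := by
  have hmid : p + q ∈ openSegment ℝ (p + q') (p' + q) := by
    refine ⟨1 / 2, 1 / 2, by norm_num, by norm_num, by norm_num, ?_⟩
    calc (1 / 2 : ℝ) • (p + q') + (1 / 2 : ℝ) • (p' + q)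
        = (1 / 2 : ℝ) • ((p + q) + (p' + q')) := by module
      _ = p + q := by rw [← h]; module
  have := (mem_extremePoints.1 hz).2 _ (Set.add_mem_add hp hq') _ (Set.add_mem_add hp' hq) hmid
  exact (add_right_cancel this.2).symm

variable [TopologicalSpace E] [IsTopologicalAddGroup E] [ContinuousSMul ℝ E]
  [LocallyConvexSpace ℝ E] [T2Space E]

/-- The extreme points of a polytope are exposed. -/
theorem Set.Finite.extremePoints_convexHull_subset_exposedPoints {S : Set E} (hS : S.Finite) :
    (convexHull ℝ S).extremePoints ℝ ⊆ (convexHull ℝ S).exposedPoints ℝ := by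
  intro x hx
  have hxS : x ∉ convexHull ℝ (S \ {x}) := fun h =>
    ((convex_convexHull ℝ S).mem_extremePoints_iff_mem_sdiff_convexHull_sdiff.1 hx).2
      (convexHull_mono (Set.sdiff_subset_sdiff_left (subset_convexHull ℝ S)) h)
  obtain ⟨f, u, hfu, hux⟩ := geometric_hahn_banach_closed_point (convex_convexHull ℝ (S \ {x}))
    ((hS.subset Set.sdiff_subset).isClosed_convexHull ℝ) hxS
  have hlt : ∀ y ∈ convexHull ℝ S, y = x ∨ f y < f x := by
    have hconv : Convex ℝ {y | y = x ∨ f y < f x} := by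
      intro y hy z hz a b ha hb hab
      have hle : ∀ {w}, (w = x ∨ f w < f x) → f w ≤ f x := by
        rintro w (rfl | hw)
        exacts [le_rfl, hw.le]
      by_cases ha0 : a = 0
      · obtain rfl : b = 1 := by linarith
        simpa [ha0] using hz
      by_cases hb0 : b = 0
      · obtain rfl : a = 1 := by linarith
        simpa [hb0] using hy
      have ha' : 0 < a := lt_of_le_of_ne ha (Ne.symm ha0)
      have hb' : 0 < b := lt_of_le_of_ne hb (Ne.symm hb0)
      have hya := hle hy
      have hza := hle hz
      have hb1 : b = 1 - a := by linarith
      rcases hy with rfl | hy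
      · rcases hz with rfl | hz
        · left
          rw [← add_smul, hab, one_smul]
        · right
          simp only [map_add, map_smul, smul_eq_mul]
          subst hb1
          nlinarith
      · right
        simp only [map_add, map_smul, smul_eq_mul]
        subst hb1
        nlinarith
    refine fun y hy => convexHull_min (fun s hs => ?_) hconv hy
    by_cases hsx : s = x
    · exact Or.inl hsx
    · exact Or.inr ((hfu s (subset_convexHull ℝ _ ⟨hs, hsx⟩)).trans hux)
  refine ⟨hx.1, f, fun y hy => ?_⟩
  rcases hlt y hy with rfl | h
  · exact ⟨le_rfl, fun _ => rfl⟩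
  · exact ⟨h.le, fun h' => absurd h' h.not_ge⟩

/-- Every exposed point of `A` is a summand of an extreme point of `A + B`, for `B` compact. -/
theorem IsCompact.exists_add_mem_extremePoints {A B : Set E} (hB : IsCompact B)
    (hBne : B.Nonempty) {x : E} (hx : x ∈ A.exposedPoints ℝ) :
    ∃ y ∈ B, x + y ∈ (A + B).extremePoints ℝ := by
  obtain ⟨hxA, f, hf⟩ := hx
  have hexp : IsExposed ℝ B (f.toExposed B) := ContinuousLinearMap.toExposed.isExposed
  obtain ⟨m, hmB, hm⟩ := hB.exists_isMaxOn hBne f.continuous.continuousOn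
  obtain ⟨y, hy⟩ := (hexp.isCompact hB).extremePoints_nonempty ⟨m, hmB, fun z hz => hm hz⟩
  have hyB : y ∈ B.extremePoints ℝ := hexp.isExtreme.extremePoints_subset_extremePoints hy
  have hymax : ∀ z ∈ B, f z ≤ f y := hy.1.2
  refine ⟨y, hyB.1, mem_extremePoints_iff_left.2 ⟨Set.add_mem_add hxA hyB.1, ?_⟩⟩
  rintro _ ⟨p, hp, q, hq, rfl⟩ _ ⟨p', hp', q', hq', rfl⟩ ⟨a, b, ha, hb, hab, h⟩
  have hfsum := congrArg f h
  simp only [map_add, map_smul, smul_eq_mul] at hfsum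
  have h1 := (hf p hp).1
  have h2 := (hf p' hp').1
  have h3 := hymax q hq
  have h4 := hymax q' hq'
  have hb1 : b = 1 - a := by linarith
  have hpx : p = x := (hf p hp).2 (by
    by_contra! hlt
    subst hb1
    nlinarith [mul_lt_mul_of_pos_left hlt ha, mul_le_mul_of_nonneg_left h2 hb.le,
      mul_le_mul_of_nonneg_left h3 ha.le, mul_le_mul_of_nonneg_left h4 hb.le])
  have hpx' : p' = x := (hf p' hp').2 (by
    by_contra! hlt
    subst hb1
    nlinarith [mul_lt_mul_of_pos_left hlt hb, mul_le_mul_of_nonneg_left h1 ha.le,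
      mul_le_mul_of_nonneg_left h3 ha.le, mul_le_mul_of_nonneg_left h4 hb.le])
  subst hpx hpx'
  have hseg : y ∈ openSegment ℝ q q' := by
    refine ⟨a, b, ha, hb, hab, add_left_cancel (a := p') ?_⟩
    rw [← h]
    subst hb1
    module
  exact congrArg (p' + ·) ((mem_extremePoints_iff_left.1 hyB).2 q hq q' hq' hseg)

end

/-- The number of extreme points of a polytope `P` is at most the number of
extreme points of the Minkowski sum `P + Q`. -/
theorem card_extremePoints_le_minkowski_sum (n : ℕ)
    (S T : Finset (Fin n → ℝ)) (hS : S.Nonempty) (hT : T.Nonempty)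
    (P Q : Set (Fin n → ℝ))
    (hP : P = convexHull ℝ ↑S) (hQ : Q = convexHull ℝ ↑T) :
    (Set.extremePoints ℝ P).ncard ≤ (Set.extremePoints ℝ (P + Q)).ncard := by
  have hfin : (Set.extremePoints ℝ (P + Q)).Finite := by
    rw [hP, hQ, ← convexHull_add]
    exact (S.finite_toSet.add T.finite_toSet).subset extremePoints_convexHull_subset
  have hQc : IsCompact Q := hQ ▸ T.finite_toSet.isCompact_convexHull ℝ
  have hQne : Q.Nonempty := hQ ▸ hT.to_set.convexHull
  have hexists : ∀ x ∈ Set.extremePoints ℝ P, ∃ y ∈ Q, x + y ∈ Set.extremePoints ℝ (P + Q) := by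
    intro x hx
    refine hQc.exists_add_mem_extremePoints hQne ?_
    rw [hP] at hx ⊢
    exact S.finite_toSet.extremePoints_convexHull_subset_exposedPoints hx
  choose! g hgQ hg using hexists
  exact Set.ncard_le_ncard_of_injOn (fun x => x + g x) hg
    (fun x hx x' hx' h => Set.extremePoints_add_left_unique hx.1 hx'.1 (hgQ x hx) (hgQ x' hx')
      (hg x hx) h) hfin
end

section
/- Let m ≥ 1 and let L be a subgroup (ℤ-submodule) of ℤᵐ that contains a vector w with wᵢ > 0 for every coordinate i ∈ {1,…,m}. Then L admits a ℤ-basis b₁, …, b_r (a linearly independent family whose ℤ-span is L) such that every basis vector has all coordinates nonnegative. -/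
/-- A nonzero element of a finite free module over a PID is a multiple of a vector of some basis. -/
theorem Module.Free.exists_basis_smul_eq {R M : Type*} [CommRing R] [IsDomain R]
    [IsPrincipalIdealRing R] [AddCommGroup M] [Module R M] [Module.Free R M] [Module.Finite R M]
    {w : M} (hw : w ≠ 0) :
    ∃ (r : ℕ) (b : Module.Basis (Fin r) R M) (i : Fin r) (d : R), w = d • b i := by
  obtain ⟨n, bM, bN, f, a, snf⟩ :=
    (Submodule.span R {w}).smithNormalForm (Module.finBasis R M)
  have hn : n = 1 := by
    have h := (LinearEquiv.toSpanNonzeroSingleton R M w hw).finrank_eq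
    rw [Module.finrank_self, Module.finrank_eq_card_basis bN, Fintype.card_fin] at h
    exact h.symm
  subst hn
  have hsum := congrArg Subtype.val (bN.sum_repr ⟨w, Submodule.mem_span_singleton_self w⟩)
  refine ⟨_, bM, f 0, bN.repr ⟨w, Submodule.mem_span_singleton_self w⟩ 0 * a 0, ?_⟩
  rw [Fin.sum_univ_one, Submodule.coe_smul, snf, smul_smul] at hsum
  exact hsum.symm

/-- A subgroup of `ℤᵐ` containing a vector with all coordinates positive
admits a ℤ-basis consisting of vectors with all coordinates nonnegative. -/
theorem subgroup_with_positive_vector_has_nonneg_basis (m : ℕ) (hm : 1 ≤ m)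
    (L : Submodule ℤ (Fin m → ℤ))
    (w : Fin m → ℤ) (hw : w ∈ L) (hwpos : ∀ i, 0 < w i) :
    ∃ (r : ℕ) (b : Fin r → (Fin m → ℤ)),
      LinearIndependent ℤ b ∧ Submodule.span ℤ (Set.range b) = L ∧
      ∀ i j, 0 ≤ b i j := by
  have hw0 : (⟨w, hw⟩ : L) ≠ 0 := fun h =>
    (hwpos ⟨0, hm⟩).ne' (congrFun (congrArg Subtype.val h) ⟨0, hm⟩)
  obtain ⟨r, c, p, d, hd⟩ := Module.Free.exists_basis_smul_eq (R := ℤ) hw0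
  have hdw : ∀ t, 0 < d * (c p : Fin m → ℤ) t := fun t => by
    have h := congrFun (congrArg Subtype.val hd) t
    simp only [Submodule.coe_smul, Pi.smul_apply, smul_eq_mul] at h
    exact h ▸ hwpos t
  obtain ⟨b, hb⟩ : ∃ b : Module.Basis (Fin r) ℤ L, ∀ t, 0 < (b p : Fin m → ℤ) t := by
    rcases le_total 0 d with h | h
    · exact ⟨c, fun t => pos_of_mul_pos_right (hdw t) h⟩
    · refine ⟨c.unitsSMul fun _ => -1, fun t => ?_⟩
      have := neg_of_mul_pos_right (hdw t) h
      simpa [Module.Basis.unitsSMul_apply] using this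
  -- Shear the basis along the positive vector `b p`.
  let k : Fin r → ℤ := fun j => if j = p then 0 else ∑ t, |(b j : Fin m → ℤ) t|
  let φ : L →ₗ[ℤ] ℤ := b.constr ℤ k
  have hφ : ∀ j, φ (b j) = k j := b.constr_basis ℤ k
  have hφp : φ (b p) = 0 := by simp [hφ, k]
  let e := b.map (LinearEquiv.transvection hφp)
  have he : ∀ j, e j = b j + k j • b p := fun j => by
    simp [e, LinearMap.transvection.apply, hφ]
  refine ⟨r, fun j => e j, ?_, ?_, fun j t => ?_⟩
  · exact e.linearIndependent.map' L.subtype L.ker_subtype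
  · have : Set.range (fun j => (e j : Fin m → ℤ)) = L.subtype '' Set.range e := by
      rw [← Set.range_comp]; rfl
    rw [this, Submodule.span_image, e.span_eq, Submodule.map_subtype_top]
  · simp only [he, Submodule.coe_add, Submodule.coe_smul, Pi.add_apply, Pi.smul_apply, smul_eq_mul]
    by_cases hj : j = p
    · subst hj
      simpa [k] using (hb t).le
    · have h1 : |(b j : Fin m → ℤ) t| ≤ k j := by
        simp only [k, if_neg hj]
        exact Finset.single_le_sum (f := fun t => |(b j : Fin m → ℤ) t|)
          (fun _ _ => abs_nonneg _) (Finset.mem_univ t)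
      have h2 : k j ≤ k j * (b p : Fin m → ℤ) t :=
        le_mul_of_one_le_right ((abs_nonneg _).trans h1) (hb t)
      linarith [neg_abs_le ((b j : Fin m → ℤ) t)]
end

section
/- Let n ≥ 1 and let P ⊆ ℝⁿ be a lattice polytope (the convex hull of a nonempty finite subset of ℤⁿ). Then there exist r ≥ 0 and lattice polytopes B₁, …, B_r, each of which is a Minkowski summand of some positive integer dilate of P (i.e. for each i there are m ∈ ℕ, m ≥ 1, and a lattice polytope R with Bᵢ + R = m·P), such that: for every lattice polytope Q ⊆ ℝⁿ that is a Minkowski summand of some positive integer dilate of P, there is exactly one vector y = (y₁,…,y_r) ∈ ℤʳ such that Q + Σᵢ yᵢ⁻·Bᵢ is a translate by a vector of ℤⁿ of Σᵢ yᵢ⁺·Bᵢ, where yᵢ⁺ = max{yᵢ, 0}, yᵢ⁻ = yᵢ⁺ − yᵢ, the sums are Minkowski sums, and k·B denotes the k-fold dilate (equal to the k-fold Minkowski sum for convex B). -/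
open Pointwise

/-- `Q` is a deformation of `P`: a Minkowski summand of some positive integer dilate of `P`
complemented by a lattice polytope. -/
def IsDeformation {n : ℕ} (P Q : Set (Fin n → ℝ)) : Prop :=
  ∃ m : ℕ, 1 ≤ m ∧ ∃ R : Set (Fin n → ℝ), IsLatticePolytope R ∧ Q + R = (m : ℝ) • P

section Embedding

variable {n : ℕ}

@[simp] lemma intToReal_add (a b : Fin n → ℤ) :
    intToReal (a + b) = intToReal a + intToReal b := by
  ext i; simp [intToReal]

@[simp] lemma intToReal_sub (a b : Fin n → ℤ) :
    intToReal (a - b) = intToReal a - intToReal b := by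
  ext i; simp [intToReal]

@[simp] lemma intToReal_zero : intToReal (0 : Fin n → ℤ) = 0 := by
  ext i; simp [intToReal]

@[simp] lemma intToReal_zsmul (k : ℤ) (a : Fin n → ℤ) :
    intToReal (k • a) = (k : ℝ) • intToReal a := by
  ext i; simp [intToReal]

@[simp] lemma intToReal_nsmul (k : ℕ) (a : Fin n → ℤ) :
    intToReal (k • a) = (k : ℝ) • intToReal a := by
  ext i; simp [intToReal]

lemma intToReal_injective : Function.Injective (intToReal (n := n)) := fun a b h => by
  ext i; simpa [intToReal] using congrFun h i

end Embedding

section Hull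

variable {n : ℕ} {ι : Type*}

/-- The lattice polytope spanned by a family of lattice points. -/
def latticeHull (x : ι → Fin n → ℤ) : Set (Fin n → ℝ) :=
  convexHull ℝ (Set.range fun v => intToReal (x v))

lemma mem_latticeHull (x : ι → Fin n → ℤ) (v : ι) : intToReal (x v) ∈ latticeHull x :=
  subset_convexHull _ _ ⟨v, rfl⟩

lemma isLatticePolytope_latticeHull [Fintype ι] [Nonempty ι] (x : ι → Fin n → ℤ) :
    IsLatticePolytope (latticeHull x) := by
  classical
  refine ⟨Finset.univ.image x, Finset.univ_nonempty.image x, ?_⟩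
  rw [latticeHull, Finset.coe_image, Finset.coe_univ, Set.image_univ, ← Set.range_comp]
  rfl

lemma smul_latticeHull (k : ℤ) (x : ι → Fin n → ℤ) :
    (k : ℝ) • latticeHull x = latticeHull (k • x) := by
  rw [latticeHull, latticeHull, ← convexHull_smul, Set.smul_set_range]
  simp only [Pi.smul_apply, intToReal_zsmul]

lemma latticeHull_const [Nonempty ι] (z : Fin n → ℤ) :
    latticeHull (Function.const ι z) = {intToReal z} := by
  simp [latticeHull]

lemma apply_le_of_mem_latticeHull {x : ι → Fin n → ℤ} {f : StrongDual ℝ (Fin n → ℝ)} {c : ℝ}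
    (hc : ∀ v, f (intToReal (x v)) ≤ c) {p : Fin n → ℝ} (hp : p ∈ latticeHull x) : f p ≤ c := by
  have hconv : Convex ℝ {q | f q ≤ c} := convex_halfSpace_le f.toLinearMap.isLinear c
  exact convexHull_min (by rintro _ ⟨v, rfl⟩; exact hc v) hconv hp

/-- Membership in a polytope can be tested by linear functionals. -/
lemma mem_latticeHull_of_forall_exists_le [Finite ι] {x : ι → Fin n → ℤ} {p : Fin n → ℝ}
    (h : ∀ f : StrongDual ℝ (Fin n → ℝ), ∃ v, f p ≤ f (intToReal (x v))) :
    p ∈ latticeHull x := by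
  by_contra hp
  obtain ⟨f, c, hlt, hc⟩ := geometric_hahn_banach_closed_point (convex_convexHull ℝ _)
    ((Set.finite_range _).isClosed_convexHull ℝ) hp
  obtain ⟨v, hv⟩ := h f
  exact absurd (hlt _ (mem_latticeHull x v)) (by linarith)

end Hull

section SupportCone

variable {n : ℕ} {ι : Type*}

/-- The families `x` such that every linear functional maximized over `u` at the index `v` is
maximized over `x` at `v`. -/
def supportCone (u : ι → Fin n → ℤ) : AddSubmonoid (ι → Fin n → ℤ) where
  carrier := {x | ∀ (f : StrongDual ℝ (Fin n → ℝ)) (v : ι),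
    (∀ w, f (intToReal (u w)) ≤ f (intToReal (u v))) →
      ∀ w, f (intToReal (x w)) ≤ f (intToReal (x v))}
  zero_mem' := by intro f v _ w; simp
  add_mem' := by
    intro x y hx hy f v hv w
    simpa using add_le_add (hx f v hv w) (hy f v hv w)

variable {u x y : ι → Fin n → ℤ}

lemma self_mem_supportCone (u : ι → Fin n → ℤ) : u ∈ supportCone u := fun _ _ h => h

lemma const_mem_supportCone (u : ι → Fin n → ℤ) (z : Fin n → ℤ) :
    Function.const ι z ∈ supportCone u := fun _ _ _ _ => le_rfl

lemma mem_supportCone_of_nsmul_mem {k : ℕ} (hk : 0 < k) (h : k • x ∈ supportCone u) :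
    x ∈ supportCone u := by
  intro f v hv w
  have := h f v hv w
  simp only [Pi.smul_apply, intToReal_nsmul, map_smul, smul_eq_mul] at this
  exact le_of_mul_le_mul_left this (by exact_mod_cast hk)

/-- Minkowski addition of polytopes is pointwise addition of families in the support cone. -/
lemma latticeHull_add [Finite ι] [Nonempty ι] (hx : x ∈ supportCone u) (hy : y ∈ supportCone u) :
    latticeHull (x + y) = latticeHull x + latticeHull y := by
  apply subset_antisymm
  · rw [latticeHull, latticeHull, latticeHull, ← convexHull_add]
    apply convexHull_mono
    rintro _ ⟨v, rfl⟩
    exact ⟨_, ⟨v, rfl⟩, _, ⟨v, rfl⟩, by simp⟩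
  · rintro _ ⟨p, hp, q, hq, rfl⟩
    refine mem_latticeHull_of_forall_exists_le fun f => ?_
    obtain ⟨v, hv⟩ := Finite.exists_max fun w => f (intToReal (u w))
    refine ⟨v, ?_⟩
    simpa using add_le_add (apply_le_of_mem_latticeHull (hx f v hv) hp)
      (apply_le_of_mem_latticeHull (hy f v hv) hq)

lemma latticeHull_sum [Finite ι] [Nonempty ι] {κ : Type*} (s : Finset κ)
    (b : κ → ι → Fin n → ℤ) (hb : ∀ i ∈ s, b i ∈ supportCone u) :
    latticeHull (∑ i ∈ s, b i) = ∑ i ∈ s, latticeHull (b i) := by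
  classical
  induction s using Finset.induction_on with
  | empty =>
    have := latticeHull_const (ι := ι) (0 : Fin n → ℤ)
    rwa [Function.const_zero, intToReal_zero, Set.singleton_zero] at this
  | insert i s hi ih =>
    rw [Finset.sum_insert hi, Finset.sum_insert hi,
      latticeHull_add (u := u) (hb i (by simp))
        (sum_mem fun j hj => hb j (Finset.mem_insert_of_mem hj)),
      ih fun j hj => hb j (Finset.mem_insert_of_mem hj)]

/-- The families in the support cone of `u` whose complement in a positive multiple of `u` also
lies in the support cone; they parametrize the lattice deformations of the hull of `u`. -/
def deformationCone (u : ι → Fin n → ℤ) : AddSubmonoid (ι → Fin n → ℤ) where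
  carrier := {x | x ∈ supportCone u ∧ ∃ m : ℕ, 1 ≤ m ∧ m • u - x ∈ supportCone u}
  zero_mem' := ⟨zero_mem _, 1, le_rfl, by simpa using self_mem_supportCone u⟩
  add_mem' := by
    rintro x y ⟨hx, k, hk, hkx⟩ ⟨hy, m, _, hmy⟩
    refine ⟨add_mem hx hy, k + m, by omega, ?_⟩
    convert add_mem hkx hmy using 1
    rw [add_smul]
    abel

lemma const_mem_deformationCone (u : ι → Fin n → ℤ) (z : Fin n → ℤ) :
    Function.const ι z ∈ deformationCone u := by
  refine ⟨const_mem_supportCone u z, 1, le_rfl, ?_⟩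
  convert add_mem (self_mem_supportCone u) (const_mem_supportCone u (-z)) using 1
  ext v i
  simp [sub_eq_add_neg]

lemma zsmul_mem_of_nonneg {A : Type*} [AddCommGroup A] (M : AddSubmonoid A) {a : A} (ha : a ∈ M)
    {k : ℤ} (hk : 0 ≤ k) : k • a ∈ M := by
  lift k to ℕ using hk
  simpa using nsmul_mem ha k

lemma isDeformation_latticeHull [Fintype ι] [Nonempty ι] (hx : x ∈ deformationCone u) :
    IsDeformation (latticeHull u) (latticeHull x) := by
  obtain ⟨hx, m, hm, hmx⟩ := hx
  refine ⟨m, hm, latticeHull (m • u - x), isLatticePolytope_latticeHull _, ?_⟩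
  rw [← latticeHull_add hx hmx, add_sub_cancel]
  simpa using (smul_latticeHull (m : ℤ) u).symm

/-- A family in the deformation cone is determined by its hull when `u` consists of vertices. -/
lemma eq_of_latticeHull_eq [Finite ι] [Nonempty ι]
    (hu : ∀ v, intToReal (u v) ∈ (latticeHull u).extremePoints ℝ)
    (hx : x ∈ deformationCone u) (hy : y ∈ deformationCone u)
    (h : latticeHull x = latticeHull y) : x = y := by
  have key : ∀ {a b : ι → Fin n → ℤ} {m : ℕ}, 1 ≤ m → a ∈ supportCone u →
      m • u - a ∈ supportCone u → latticeHull a = latticeHull b → ∀ v,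
      (m : ℝ)⁻¹ • (intToReal (b v) + ((m : ℝ) • intToReal (u v) - intToReal (a v))) ∈
        latticeHull u := by
    intro a b m hm ha hma hab v
    have hmem : intToReal (b v) + ((m : ℝ) • intToReal (u v) - intToReal (a v)) ∈
        latticeHull a + latticeHull (m • u - a) := by
      refine Set.add_mem_add (hab ▸ mem_latticeHull b v) ?_
      simpa only [Pi.sub_apply, Pi.smul_apply, intToReal_sub, intToReal_nsmul] using
        mem_latticeHull (m • u - a) v
    have hsmul : latticeHull a + latticeHull (m • u - a) = (m : ℝ) • latticeHull u := by
      rw [← latticeHull_add ha hma, add_sub_cancel]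
      simpa using (smul_latticeHull (m : ℤ) u).symm
    rw [hsmul] at hmem
    exact (Set.mem_smul_set_iff_inv_smul_mem₀ (by positivity) _ _).1 hmem
  obtain ⟨hx, k, hk, hkx⟩ := hx
  obtain ⟨hy, m, hm, hmy⟩ := hy
  funext v
  have hp := key hk hx hkx h v
  have hq := key hm hy hmy h.symm v
  have hk' : (0 : ℝ) < k := by exact_mod_cast hk
  have hm' : (0 : ℝ) < m := by exact_mod_cast hm
  have heq := (hu v).2 hp hq ⟨k / (k + m), m / (k + m), by positivity, by positivity,
    by field_simp, by ext i; simp; field_simp; ring⟩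
  apply intToReal_injective
  ext i
  have hi := congrFun heq i
  simp at hi
  field_simp at hi
  linarith

/-- Every lattice deformation of the hull of `u` is the hull of a family in the deformation
cone when `u` consists of vertices. -/
lemma exists_mem_deformationCone [Finite ι] [Nonempty ι]
    (hu : ∀ v, intToReal (u v) ∈ (latticeHull u).extremePoints ℝ) {Q : Set (Fin n → ℝ)}
    (hQ : IsLatticePolytope Q) (hd : IsDeformation (latticeHull u) Q) :
    ∃ x ∈ deformationCone u, latticeHull x = Q := by
  obtain ⟨S, -, rfl⟩ := hQ
  obtain ⟨m, hm, _, ⟨T, -, rfl⟩, hST⟩ := hd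
  have hm' : (m : ℝ) ≠ 0 := by positivity
  have hsum : ∀ v, ∃ s ∈ S, ∃ t ∈ T, s + t = m • u v := by
    intro v
    have hext : (m : ℝ) • intToReal (u v) ∈ ((m : ℝ) • latticeHull u).extremePoints ℝ := by
      have := image_extremePoints (𝕜 := ℝ)
        (LinearEquiv.smulOfNeZero ℝ (Fin n → ℝ) (m : ℝ) hm') (latticeHull u)
      exact this.subset ⟨_, hu v, rfl⟩
    rw [← hST, ← convexHull_add] at hext
    obtain ⟨_, ⟨s, hs, rfl⟩, _, ⟨t, ht, rfl⟩, hst⟩ := extremePoints_convexHull_subset hext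
    exact ⟨s, hs, t, ht, intToReal_injective
      (by simpa only [intToReal_add, intToReal_nsmul] using hst)⟩
  choose x hxS x' hxT hxx using hsum
  have hle : ∀ (f : StrongDual ℝ (Fin n → ℝ)) (v : ι),
      (∀ w, f (intToReal (u w)) ≤ f (intToReal (u v))) →
      ∀ p ∈ convexHull ℝ (intToReal '' (S : Set (Fin n → ℤ))),
      ∀ q ∈ convexHull ℝ (intToReal '' (T : Set (Fin n → ℤ))),
      f p + f q ≤ f (intToReal (x v)) + f (intToReal (x' v)) := by
    intro f v hv p hp q hq
    have hpq := Set.add_mem_add hp hq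
    rw [hST] at hpq
    obtain ⟨c, hc, hcpq⟩ := hpq
    have hfc := apply_le_of_mem_latticeHull hv hc
    rw [← map_add, ← map_add, ← intToReal_add, hxx, intToReal_nsmul, ← hcpq]
    simpa using mul_le_mul_of_nonneg_left hfc (Nat.cast_nonneg m)
  have hxmem : ∀ v, intToReal (x v) ∈ convexHull ℝ (intToReal '' (S : Set (Fin n → ℤ))) :=
    fun v => subset_convexHull _ _ ⟨_, hxS v, rfl⟩
  have hxmem' : ∀ v, intToReal (x' v) ∈ convexHull ℝ (intToReal '' (T : Set (Fin n → ℤ))) :=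
    fun v => subset_convexHull _ _ ⟨_, hxT v, rfl⟩
  have hx' : m • u - x = x' := by
    funext v
    rw [Pi.sub_apply, Pi.smul_apply, ← hxx, add_sub_cancel_left]
  refine ⟨x, ⟨fun f v hv w => ?_, m, hm, ?_⟩, subset_antisymm ?_ fun p hp => ?_⟩
  · simpa using hle f v hv _ (hxmem w) _ (hxmem' v)
  · rw [hx']
    intro f v hv w
    simpa using hle f v hv _ (hxmem v) _ (hxmem' w)
  · exact convexHull_min (by rintro _ ⟨v, rfl⟩; exact hxmem v) (convex_convexHull _ _)
  · refine mem_latticeHull_of_forall_exists_le fun f => ?_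
    obtain ⟨v, hv⟩ := Finite.exists_max fun w => f (intToReal (u w))
    exact ⟨v, by simpa using hle f v hv _ hp _ (hxmem' v)⟩

/-- The group generated by the deformation cone, normalized to vanish at the index `o`. -/
def deformationGroup (u : ι → Fin n → ℤ) (o : ι) : AddSubgroup (ι → Fin n → ℤ) where
  carrier := {x | x o = 0 ∧ ∃ m : ℕ, m • u + x ∈ supportCone u ∧ m • u - x ∈ supportCone u}
  zero_mem' := ⟨rfl, 0, by simp⟩
  add_mem' := by
    rintro x y ⟨hx, k, hk, hk'⟩ ⟨hy, m, hm, hm'⟩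
    refine ⟨by simp [hx, hy], k + m, ?_, ?_⟩
    · convert add_mem hk hm using 1
      rw [add_smul]
      abel
    · convert add_mem hk' hm' using 1
      rw [add_smul]
      abel
  neg_mem' := by
    rintro x ⟨hx, m, hm, hm'⟩
    exact ⟨by simp [hx], m, by simpa [← sub_eq_add_neg] using hm', by simpa using hm⟩

lemma sub_const_mem_deformationGroup (hx : x ∈ deformationCone u) (o : ι) :
    x - Function.const ι (x o) ∈ deformationGroup u o := by
  obtain ⟨hx, m, -, hmx⟩ := hx
  refine ⟨by simp, m, ?_, ?_⟩
  · convert add_mem (add_mem (nsmul_mem (self_mem_supportCone u) m) hx)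
      (const_mem_supportCone u (-x o)) using 1
    ext v i
    simp
    ring
  · convert add_mem hmx (const_mem_supportCone u (x o)) using 1
    ext v i
    simp
    ring

lemma self_mem_deformationCone (u : ι → Fin n → ℤ) : u ∈ deformationCone u :=
  ⟨self_mem_supportCone u, 1, le_rfl, by simp⟩

lemma exists_add_nsmul_mem_deformationCone {o : ι} (hx : x ∈ deformationGroup u o) :
    ∃ m : ℕ, ∀ k, m ≤ k → x + k • (u - Function.const ι (u o)) ∈ deformationCone u := by
  obtain ⟨-, m, hm, hm'⟩ := hx
  refine ⟨m, fun k hk => ?_⟩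
  obtain ⟨j, rfl⟩ := Nat.exists_eq_add_of_le hk
  have hbase : m • u + x ∈ deformationCone u := by
    refine ⟨hm, m + m + 1, by omega, ?_⟩
    convert add_mem hm' (self_mem_supportCone u) using 1
    simp only [add_smul, one_smul]
    abel
  convert add_mem (add_mem hbase (nsmul_mem (self_mem_deformationCone u) j))
    (const_mem_deformationCone u (-((m + j) • u o))) using 1
  ext v i
  simp
  ring

/-- The deformation cone is saturated along the direction of `u`. -/
lemma mem_deformationCone_of_nsmul_eq {o : ι} {k : ℕ} (hk : 0 < k)
    (h : k • x = u - Function.const ι (u o)) : x ∈ deformationCone u := by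
  have hx : x ∈ supportCone u := by
    apply mem_supportCone_of_nsmul_mem hk
    rw [h]
    convert add_mem (self_mem_supportCone u) (const_mem_supportCone u (-u o)) using 1
    ext v i
    simp [sub_eq_add_neg]
  refine ⟨hx, 1, le_rfl, ?_⟩
  obtain ⟨j, rfl⟩ := Nat.exists_eq_add_of_le' hk
  convert add_mem (nsmul_mem hx j) (const_mem_supportCone u (u o)) using 1
  have hu : u = (j + 1) • x + Function.const ι (u o) := by rw [h]; abel
  nth_rewrite 1 [hu]
  rw [add_smul]
  simp only [one_smul]
  abel

end SupportCone

/-- Every nonzero vector of a finite free `ℤ`-module is a positive multiple of a basis vector. -/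
lemma exists_basis_nsmul_eq {H κ : Type*} [AddCommGroup H] [Finite κ] (b₀ : Module.Basis κ ℤ H)
    {e : H} (he : e ≠ 0) :
    ∃ (b : Module.Basis κ ℤ H) (j : κ) (k : ℕ), 0 < k ∧ k • b j = e := by
  classical
  obtain ⟨r, bM, bN, g, a, hsnf⟩ := Submodule.smithNormalForm b₀ (Submodule.span ℤ {e})
  have hr : Nonempty (Fin r) := by
    by_contra hr
    rw [not_nonempty_iff] at hr
    have := bN.ext_elem (x := ⟨e, Submodule.mem_span_singleton_self e⟩) (y := 0)
      (fun i => isEmptyElim i)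
    exact he (by simpa using this)
  obtain ⟨i⟩ := hr
  obtain ⟨c, hc⟩ := Submodule.mem_span_singleton.1 (bN i).2
  have hc0 : c ≠ 0 := by
    rintro rfl
    exact bN.ne_zero i (Subtype.ext (by simpa using hc.symm))
  have hrep : ∀ j, j ≠ g i → bM.repr e j = 0 := by
    intro j hj
    have := congrArg (fun x => bM.repr x j) (hc.trans (hsnf i))
    simpa [hc0, Finsupp.single_apply, hj.symm] using this
  have heq : bM.repr e (g i) • bM (g i) = e := by
    apply bM.repr.injective
    ext j
    by_cases hj : j = g i
    · simp [hj]
    · simp [hrep j hj, Ne.symm hj]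
  set d := bM.repr e (g i)
  have hd : d ≠ 0 := by
    rintro hd
    rw [hd, zero_smul] at heq
    exact he heq.symm
  rcases lt_or_gt_of_ne hd with hd | hd
  · refine ⟨bM.map (LinearEquiv.neg ℤ), g i, d.natAbs, by omega, ?_⟩
    rw [← natCast_zsmul, Int.ofNat_natAbs_of_nonpos hd.le]
    simpa using heq
  · refine ⟨bM, g i, d.natAbs, by omega, ?_⟩
    rw [← natCast_zsmul, Int.natAbs_of_nonneg hd.le]
    exact heq

/-- A subset of a finite free `ℤ`-module contains a basis if it absorbs every vector after adding
large multiples of `e` and contains every vector having `e` as a positive multiple. -/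
lemma exists_basis_mem {H : Type*} [AddCommGroup H] [Module.Free ℤ H] [Module.Finite ℤ H]
    (M : Set H) (e : H) (habs : ∀ x, ∃ m : ℕ, ∀ k, m ≤ k → x + k • e ∈ M)
    (hsat : ∀ (x : H) (k : ℕ), 0 < k → k • x = e → x ∈ M) :
    ∃ (r : ℕ) (b : Module.Basis (Fin r) ℤ H), ∀ i, b i ∈ M := by
  classical
  refine ⟨Module.finrank ℤ H, ?_⟩
  by_cases he : e = 0
  · refine ⟨Module.finBasis ℤ H, fun i => ?_⟩
    obtain ⟨m, hm⟩ := habs (Module.finBasis ℤ H i)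
    simpa [he] using hm m le_rfl
  obtain ⟨b, j, k, hk, hkj⟩ := exists_basis_nsmul_eq (Module.finBasis ℤ H) he
  choose m hm using fun i => habs (b i)
  let ℓ : Module.Dual ℤ H := b.constr ℤ fun i => if i = j then (0 : ℤ) else m i * k
  have hℓ : ℓ (b j) = 0 := by rw [b.constr_basis, if_pos rfl]
  refine ⟨b.map (LinearEquiv.transvection hℓ), fun i => ?_⟩
  rw [Module.Basis.map_apply, LinearEquiv.transvection.apply]
  by_cases hi : i = j
  · subst hi
    simpa [hℓ] using hsat _ k hk hkj
  · have hi' : ℓ (b i) = m i * k := by rw [b.constr_basis, if_neg hi]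
    rw [hi', mul_smul, natCast_zsmul, natCast_zsmul, hkj]
    exact hm i _ le_rfl

/-- A lattice polytope is the hull of its vertices, which are lattice points. -/
lemma IsLatticePolytope.exists_vertices {n : ℕ} {P : Set (Fin n → ℝ)} (hP : IsLatticePolytope P) :
    ∃ V : Finset (Fin n → ℤ), V.Nonempty ∧ P = latticeHull (fun v : V => (v : Fin n → ℤ)) ∧
      ∀ v ∈ V, intToReal v ∈ P.extremePoints ℝ := by
  classical
  obtain ⟨S, hS, rfl⟩ := hP
  set P := convexHull ℝ (intToReal '' (S : Set (Fin n → ℤ)))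
  have hfin : (intToReal '' (S : Set (Fin n → ℤ))).Finite := S.finite_toSet.image _
  have hcomp : IsCompact P := hfin.isCompact_convexHull ℝ
  have hsub : P.extremePoints ℝ ⊆ intToReal '' (S : Set (Fin n → ℤ)) :=
    extremePoints_convexHull_subset
  have hne : P.Nonempty := (hS.to_set.image intToReal).convexHull
  refine ⟨S.filter fun s => intToReal s ∈ P.extremePoints ℝ, ?_, ?_, by simp⟩
  · obtain ⟨p, hp⟩ := hcomp.extremePoints_nonempty hne
    obtain ⟨s, hs, rfl⟩ := hsub hp
    exact ⟨s, Finset.mem_filter.2 ⟨hs, hp⟩⟩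
  · have hrange : (Set.range fun v : S.filter (fun s => intToReal s ∈ P.extremePoints ℝ) =>
        intToReal (v : Fin n → ℤ)) = P.extremePoints ℝ := by
      ext p
      constructor
      · rintro ⟨v, rfl⟩
        exact (Finset.mem_filter.1 v.2).2
      · intro hp
        obtain ⟨s, hs, rfl⟩ := hsub hp
        exact ⟨⟨s, Finset.mem_filter.2 ⟨hs, hp⟩⟩, rfl⟩
    rw [latticeHull, hrange, ← ((hfin.subset hsub).isClosed_convexHull ℝ).closure_eq,
      closure_convexHull_extremePoints hcomp (convex_convexHull _ _)]

/-- Every lattice polytope `P` admits a finite polytope factorization basis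
`B₁, …, B_r` of lattice polytopes, each a deformation of `P`, such that every lattice
polytope `Q` deforming `P` has a unique signed Minkowski expansion
`Q + Σ yᵢ⁻ Bᵢ = z + Σ yᵢ⁺ Bᵢ` up to a lattice translation `z ∈ ℤⁿ`. -/
theorem polytope_factorization_basis (n : ℕ) (hn : 1 ≤ n)
    (P : Set (Fin n → ℝ)) (hP : IsLatticePolytope P) :
    ∃ (r : ℕ) (B : Fin r → Set (Fin n → ℝ)),
      (∀ i, IsLatticePolytope (B i)) ∧
      (∀ i, IsDeformation P (B i)) ∧
      (∀ Q : Set (Fin n → ℝ), IsLatticePolytope Q → IsDeformation P Q →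
        ∃! y : Fin r → ℤ, ∃ z : Fin n → ℤ,
          Q + ∑ i, ((max (y i) 0 - y i : ℤ) : ℝ) • B i
            = intToReal z +ᵥ ∑ i, ((max (y i) 0 : ℤ) : ℝ) • B i) := by
  obtain ⟨V, hV, hPV, hext⟩ := hP.exists_vertices
  have : Nonempty V := hV.to_subtype
  let o : V := Classical.arbitrary V
  set u : V → Fin n → ℤ := fun v => v
  have hvert : ∀ v, intToReal (u v) ∈ (latticeHull u).extremePoints ℝ :=
    fun v => hPV ▸ hext v v.2
  let H : Submodule ℤ (V → Fin n → ℤ) := (deformationGroup u o).toIntSubmodule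
  obtain ⟨r, b, hb⟩ := exists_basis_mem (H := H) {x | (x : V → Fin n → ℤ) ∈ deformationCone u}
    ⟨_, sub_const_mem_deformationGroup (self_mem_deformationCone u) o⟩
    (fun x => exists_add_nsmul_mem_deformationCone x.2)
    (fun x k hk h => mem_deformationCone_of_nsmul_eq hk (congrArg Subtype.val h))
  have hb' : ∀ i, (b i : V → Fin n → ℤ) ∈ deformationCone u := hb
  refine ⟨r, fun i => latticeHull (b i : V → Fin n → ℤ),
    fun i => isLatticePolytope_latticeHull _,
    fun i => hPV ▸ isDeformation_latticeHull (hb' i), fun Q hQ hd => ?_⟩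
  rw [hPV] at hd
  obtain ⟨x, hx, rfl⟩ := exists_mem_deformationCone hvert hQ hd
  have hcomb : ∀ c : Fin r → ℤ, (∀ i, 0 ≤ c i) →
      (∑ i, c i • (b i : V → Fin n → ℤ)) ∈ deformationCone u ∧
      ∑ i, ((c i : ℤ) : ℝ) • latticeHull (b i : V → Fin n → ℤ) =
        latticeHull (∑ i, c i • (b i : V → Fin n → ℤ)) := by
    intro c hc
    have hmem : ∀ i, c i • (b i : V → Fin n → ℤ) ∈ deformationCone u :=
      fun i => zsmul_mem_of_nonneg _ (hb' i) (hc i)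
    refine ⟨sum_mem fun i _ => hmem i, ?_⟩
    rw [latticeHull_sum (u := u) _ _ fun i _ => (hmem i).1]
    simp only [smul_latticeHull]
  have hiff : ∀ (y : Fin r → ℤ) (z : Fin n → ℤ),
      latticeHull x + ∑ i, ((max (y i) 0 - y i : ℤ) : ℝ) • latticeHull (b i : V → Fin n → ℤ)
        = intToReal z +ᵥ ∑ i, ((max (y i) 0 : ℤ) : ℝ) • latticeHull (b i : V → Fin n → ℤ) ↔
      x - Function.const V z = ((∑ i, y i • b i : H) : V → Fin n → ℤ) := by
    intro y z
    obtain ⟨hneg, hneg'⟩ := hcomb (fun i => max (y i) 0 - y i) fun i => by simp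
    obtain ⟨hpos, hpos'⟩ := hcomb (fun i => max (y i) 0) fun i => by simp
    have hz := const_mem_deformationCone u z
    rw [hneg', hpos', ← Set.singleton_vadd, ← latticeHull_const (ι := V) z, vadd_eq_add,
      ← latticeHull_add hx.1 hneg.1, ← latticeHull_add hz.1 hpos.1]
    have hval : ((∑ i, y i • b i : H) : V → Fin n → ℤ) =
        ∑ i, max (y i) 0 • (b i : V → Fin n → ℤ) -
          ∑ i, (max (y i) 0 - y i) • (b i : V → Fin n → ℤ) := by
      simp [sub_smul, ← Finset.sum_sub_distrib]
    rw [hval, sub_eq_sub_iff_add_eq_add, add_comm _ (Function.const V z)]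
    exact ⟨eq_of_latticeHull_eq hvert (add_mem hx hneg) (add_mem hz hpos), fun h => by rw [h]⟩
  let xH : H := ⟨_, sub_const_mem_deformationGroup hx o⟩
  refine ⟨b.repr xH, ⟨x o, (hiff _ _).2 ?_⟩, ?_⟩
  · rw [b.sum_repr]
  · rintro y ⟨z, hz⟩
    have hyz := (hiff y z).1 hz
    have hzo : z = x o := by
      have h0 : ((∑ i, y i • b i : H) : V → Fin n → ℤ) o = 0 := (∑ i, y i • b i : H).2.1
      rw [← hyz] at h0
      exact (sub_eq_zero.1 h0).symm
    subst hzo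
    have hxy : xH = ∑ i, y i • b i := Subtype.ext hyz
    rw [hxy, b.repr_sum_self]
end

section
/- Let n ≥ 1, let ℓ : {1,…,n+1} → {1,…,n} be a surjection, and let {p, q} with p ≠ q be its unique two-element fiber. Define C(ℓ) = {x ∈ ℝ^{n+1} : for all i, j, if ℓ(i) < ℓ(j) then x_i > x_j, and if ℓ(i) = ℓ(j) then x_i = x_j}. Let I ⊆ {1,…,n+1} with |I| ≥ 2, and for r ≠ s in I define C_{rs} = {x ∈ ℝ^{n+1} : x_r = x_s and x_t ≤ x_r for all t ∈ I}. Then there exist r ≠ s in I with C(ℓ) ⊆ C_{rs} if and only if p ∈ I, q ∈ I, and ℓ(p) ≤ ℓ(t) for all t ∈ I. -/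
/-- A surjection onto a set with one element less which identifies `p` and `q` is injective
away from `p`. -/
theorem injOn_compl_singleton_of_surjective {α β : Type*} [Fintype α] [Fintype β]
    (hcard : Fintype.card α = Fintype.card β + 1) {f : α → β} (hf : Function.Surjective f)
    {p q : α} (hpq : p ≠ q) (hfib : f p = f q) : Set.InjOn f {p}ᶜ := by
  classical
  have hsurj : Function.Surjective (fun i : {i // i ≠ p} => f i) := by
    intro y
    obtain ⟨i, rfl⟩ := hf y
    by_cases hi : i = p
    · exact ⟨⟨q, hpq.symm⟩, by rw [hi, hfib]⟩
    · exact ⟨⟨i, hi⟩, rfl⟩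
  have hc : Fintype.card {i // i ≠ p} = Fintype.card β := by
    simp [Fintype.card_subtype_compl, hcard]
  have hinj := ((Fintype.bijective_iff_surjective_and_card _).2 ⟨hsurj, hc⟩).1
  intro i hi j hj hij
  exact congrArg Subtype.val (@hinj ⟨i, hi⟩ ⟨j, hj⟩ hij)

/-- The open braid cone `C(ℓ)` indexed by a surjection
`ℓ : [n+1] → [n]` with two-element fiber `{p, q}` is contained in some cone `C_{rs}`
(`r ≠ s` in `I`) of the normal fan of the simplex `Δ_I` iff `p ∈ I`, `q ∈ I` and
`ℓ p ≤ ℓ t` for all `t ∈ I`. -/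
theorem braid_cone_in_simplex_normal_cone (n : ℕ) (hn : 1 ≤ n)
    (ℓ : Fin (n + 1) → Fin n) (hℓ : Function.Surjective ℓ)
    (p q : Fin (n + 1)) (hpq : p ≠ q) (hfib : ℓ p = ℓ q)
    (I : Finset (Fin (n + 1))) (hI : 2 ≤ I.card) :
    (∃ r ∈ I, ∃ s ∈ I, r ≠ s ∧
      {x : Fin (n + 1) → ℝ | ∀ i j, (ℓ i < ℓ j → x i > x j) ∧ (ℓ i = ℓ j → x i = x j)} ⊆
        {x : Fin (n + 1) → ℝ | x r = x s ∧ ∀ t ∈ I, x t ≤ x r}) ↔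
    (p ∈ I ∧ q ∈ I ∧ ∀ t ∈ I, ℓ p ≤ ℓ t) := by
  constructor
  · rintro ⟨r, hr, s, hs, hrs, hsub⟩
    -- Test the containment on the point `x i = -ℓ i` of the braid cone.
    obtain ⟨hxrs, hxmax⟩ := @hsub (fun i => -((ℓ i : ℕ) : ℝ)) (fun i j =>
      ⟨fun h => by simpa using h, fun h => by simp [h]⟩)
    have hℓrs : ℓ r = ℓ s := by simpa [Fin.ext_iff] using hxrs
    have hmin : ∀ t ∈ I, ℓ r ≤ ℓ t := fun t ht => by simpa using hxmax t ht
    have hinj := injOn_compl_singleton_of_surjective (by simp) hℓ hpq hfib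
    by_cases hrp : r = p
    · subst hrp
      obtain rfl : s = q := hinj hrs.symm hpq.symm (hℓrs.symm.trans hfib)
      exact ⟨hr, hs, hmin⟩
    · by_cases hsp : s = p
      · subst hsp
        obtain rfl : r = q := hinj hrs hpq.symm (hℓrs.trans hfib)
        exact ⟨hs, hr, fun t ht => hℓrs ▸ hmin t ht⟩
      · exact absurd (hinj hrp hsp hℓrs) hrs
  · rintro ⟨hp, hq, hmin⟩
    refine ⟨p, hp, q, hq, hpq, fun x hx => ⟨(hx p q).2 hfib, fun t ht => ?_⟩⟩
    rcases (hmin t ht).lt_or_eq with h | h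
    · exact ((hx p t).1 h).le
    · exact ((hx p t).2 h).ge
end

section
/- Let Δ = conv{(0,0), (1,0), (0,1)} ⊆ ℝ². If A and B are nonempty compact convex subsets of ℝ² with A + B = Δ (Minkowski sum), then there exist c ∈ ℝ with 0 ≤ c ≤ 1 and t ∈ ℝ² such that A = c·Δ + {t}, i.e. A is a translate of the dilate c·Δ. -/
open Pointwise

/-- The standard triangle is cut out by the inequalities `0 ≤ x₀`, `0 ≤ x₁`, `x₀ + x₁ ≤ 1`. -/
lemma mem_standard_triangle_iff (x : Fin 2 → ℝ) :
    x ∈ convexHull ℝ ({![0, 0], ![1, 0], ![0, 1]} : Set (Fin 2 → ℝ)) ↔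
      0 ≤ x 0 ∧ 0 ≤ x 1 ∧ x 0 + x 1 ≤ 1 := by
  constructor
  · intro hx
    have hconv : Convex ℝ {y : Fin 2 → ℝ | 0 ≤ y 0 ∧ 0 ≤ y 1 ∧ y 0 + y 1 ≤ 1} := by
      rintro y ⟨hy₀, hy₁, hy⟩ z ⟨hz₀, hz₁, hz⟩ a b ha hb hab
      simp only [Set.mem_ofPred_eq, Pi.add_apply, Pi.smul_apply, smul_eq_mul]
      exact ⟨by positivity, by positivity, by nlinarith⟩
    refine convexHull_min ?_ hconv hx
    rintro y (rfl | rfl | rfl) <;> simp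
  · rintro ⟨h₀, h₁, hs⟩
    rw [convexHull_insert (by simp), mem_convexJoin]
    simp only [Set.mem_singleton_iff, exists_eq_left, convexHull_pair]
    rcases (add_nonneg h₀ h₁).eq_or_lt with h | h
    · refine ⟨![1, 0], left_mem_segment ℝ _ _, 1, 0, by simp, by simp, by simp, ?_⟩
      ext i
      fin_cases i <;> simp <;> linarith
    · refine ⟨![x 0 / (x 0 + x 1), x 1 / (x 0 + x 1)],
        ⟨x 0 / (x 0 + x 1), x 1 / (x 0 + x 1), by positivity, by positivity, by field_simp, ?_⟩,
        1 - (x 0 + x 1), x 0 + x 1, by linarith, h.le, by ring, ?_⟩ <;>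
      · ext i
        fin_cases i <;> simp <;> field_simp

/-- The dilate of the standard triangle by `c ≥ 0` is cut out by the inequalities
`0 ≤ x₀`, `0 ≤ x₁`, `x₀ + x₁ ≤ c`. -/
lemma mem_smul_standard_triangle_iff {c : ℝ} (hc : 0 ≤ c) (x : Fin 2 → ℝ) :
    x ∈ c • convexHull ℝ ({![0, 0], ![1, 0], ![0, 1]} : Set (Fin 2 → ℝ)) ↔
      0 ≤ x 0 ∧ 0 ≤ x 1 ∧ x 0 + x 1 ≤ c := by
  rcases hc.eq_or_lt with rfl | hc
  · rw [Set.zero_smul_set ((Set.insert_nonempty _ _).convexHull), Set.mem_zero]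
    refine ⟨fun hx => by simp [hx], fun ⟨h₀, h₁, hs⟩ => ?_⟩
    ext i
    fin_cases i <;> simp <;> linarith
  · rw [Set.mem_smul_set_iff_inv_smul_mem₀ hc.ne', mem_standard_triangle_iff]
    simp only [Pi.smul_apply, smul_eq_mul, ← mul_add]
    rw [mul_nonneg_iff_of_pos_left (inv_pos.2 hc), mul_nonneg_iff_of_pos_left (inv_pos.2 hc),
      inv_mul_le_iff₀ hc, mul_one]

/-- The standard triangle `Δ = conv{(0,0), (1,0), (0,1)}` is indecomposable:
any Minkowski summand of `Δ` is a translate of a dilate `c·Δ` with `0 ≤ c ≤ 1`. -/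
theorem standard_triangle_indecomposable (A B : Set (Fin 2 → ℝ))
    (hA : A.Nonempty) (hB : B.Nonempty)
    (hAc : IsCompact A) (hBc : IsCompact B)
    (hAv : Convex ℝ A) (hBv : Convex ℝ B)
    (h : A + B = convexHull ℝ ({![0, 0], ![1, 0], ![0, 1]} : Set (Fin 2 → ℝ))) :
    ∃ c : ℝ, 0 ≤ c ∧ c ≤ 1 ∧ ∃ t : Fin 2 → ℝ,
      A = c • convexHull ℝ ({![0, 0], ![1, 0], ![0, 1]} : Set (Fin 2 → ℝ)) + {t} := by
  have hsum : ∀ a ∈ A, ∀ b ∈ B,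
      0 ≤ a 0 + b 0 ∧ 0 ≤ a 1 + b 1 ∧ (a 0 + b 0) + (a 1 + b 1) ≤ 1 := fun a ha b hb =>
    (mem_standard_triangle_iff (a + b)).1 (h ▸ Set.add_mem_add ha hb)
  have hvertex : ∀ v ∈ ({![0, 0], ![1, 0], ![0, 1]} : Set (Fin 2 → ℝ)),
      ∃ a ∈ A, ∃ b ∈ B, a + b = v := fun v hv =>
    Set.mem_add.1 (h ▸ subset_convexHull ℝ _ hv)
  -- Decompose each vertex of the triangle; the summands in `A` are the vertices of `A`.
  obtain ⟨p, hp, p', hp', hpv⟩ := hvertex ![0, 0] (by simp)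
  obtain ⟨q, hq, q', hq', hqv⟩ := hvertex ![1, 0] (by simp)
  obtain ⟨r, hr, r', hr', hrv⟩ := hvertex ![0, 1] (by simp)
  have hp₀ : p 0 + p' 0 = 0 := congrFun hpv 0
  have hp₁ : p 1 + p' 1 = 0 := congrFun hpv 1
  have hq₀ : q 0 + q' 0 = 1 := congrFun hqv 0
  have hq₁ : q 1 + q' 1 = 0 := congrFun hqv 1
  have hr₀ : r 0 + r' 0 = 0 := congrFun hrv 0
  have hr₁ : r 1 + r' 1 = 1 := congrFun hrv 1
  have hbound : ∀ a ∈ A, p 0 ≤ a 0 ∧ p 1 ≤ a 1 ∧ q 1 ≤ a 1 ∧ a 0 + a 1 ≤ q 0 + q 1 ∧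
      r 0 ≤ a 0 ∧ a 0 + a 1 ≤ r 0 + r 1 := by
    intro a ha
    have hap := hsum a ha p' hp'
    have haq := hsum a ha q' hq'
    have har := hsum a ha r' hr'
    refine ⟨?_, ?_, ?_, ?_, ?_, ?_⟩ <;> linarith
  have hbp := hbound p hp
  have hbq := hbound q hq
  have hbr := hbound r hr
  have hqp := hsum q hq p' hp'
  have hc : 0 ≤ q 0 - p 0 := by linarith
  refine ⟨q 0 - p 0, hc, by linarith, p, Set.Subset.antisymm ?_ ?_⟩
  · intro a ha
    have hba := hbound a ha
    refine Set.mem_add.2 ⟨a - p, (mem_smul_standard_triangle_iff hc _).2 ?_, p, rfl, by simp⟩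
    simp only [Pi.sub_apply]
    refine ⟨?_, ?_, ?_⟩ <;> linarith
  · rw [← convexHull_smul, ← convexHull_singleton (𝕜 := ℝ) p, ← convexHull_add]
    refine convexHull_min ?_ hAv
    rintro _ ⟨_, ⟨v, hv, rfl⟩, _, rfl, rfl⟩
    rcases hv with rfl | rfl | rfl
    · convert hp using 1
      ext i
      fin_cases i <;> simp
    · convert hq using 1
      ext i
      fin_cases i <;> simp
      linarith
    · convert hr using 1
      ext i
      fin_cases i <;> simp <;> linarith
end

section
/- Let n ≥ 1 and let f : ℝⁿ → ℝ be a convex function. Suppose there are finitely many affine functions g₁, …, g_k : ℝⁿ → ℝ such that for every x ∈ ℝⁿ there is some i with f(x) = gᵢ(x). Let J = {i : gᵢ(y) ≤ f(y) for all y ∈ ℝⁿ}. Then J is nonempty and f(x) = max_{i ∈ J} gᵢ(x) for every x ∈ ℝⁿ. -/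
/-- A concave function which agrees with a convex function on a neighbourhood of a point is a
global minorant of it. -/
lemma ConvexOn.le_of_eventuallyEq_concaveOn {E : Type*} [AddCommGroup E] [TopologicalSpace E]
    [Module ℝ E] [IsTopologicalAddGroup E] [ContinuousSMul ℝ E] {f g : E → ℝ}
    (hf : ConvexOn ℝ Set.univ f) (hg : ConcaveOn ℝ Set.univ g) {x : E}
    (hfg : f =ᶠ[nhds x] g) (y : E) : g y ≤ f y := by
  have hmin : IsLocalMin (f - g) x := by
    filter_upwards [hfg] with z hz
    simp [hz, hfg.eq_of_nhds]
  have := IsMinOn.of_isLocalMin_of_convex_univ hmin (hf.sub hg) y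
  simp only [Pi.sub_apply, hfg.eq_of_nhds, sub_self, sub_nonneg] at this
  exact this

/-- A convex function `f : ℝⁿ → ℝ` which is pointwise equal to one of
finitely many affine functions `g₁, …, g_k` is the pointwise maximum of those affine
pieces lying below `f` everywhere; in particular this collection is nonempty. -/
theorem convex_piecewise_affine_is_max (n : ℕ) (hn : 1 ≤ n)
    (f : (Fin n → ℝ) → ℝ) (hf : ConvexOn ℝ Set.univ f)
    (k : ℕ) (g : Fin k → (Fin n → ℝ) → ℝ)
    (haff : ∀ i, ∃ (a : Fin n → ℝ) (c : ℝ), ∀ x, g i x = c + ∑ j, a j * x j)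
    (hcover : ∀ x, ∃ i, f x = g i x)
    (J : Finset (Fin k)) (hJ : ∀ i, i ∈ J ↔ ∀ y, g i y ≤ f y) :
    ∃ hJne : J.Nonempty, ∀ x, f x = J.sup' hJne (fun i => g i x) := by
  have hfc : Continuous f := continuousOn_univ.1 (hf.continuousOn isOpen_univ)
  have hgc (i) : Continuous (g i) := by
    obtain ⟨a, c, h⟩ := haff i
    rw [funext h]
    fun_prop
  have hconc (i) : ConcaveOn ℝ Set.univ (g i) := by
    obtain ⟨a, c, h⟩ := haff i
    have hlin : g i = fun x => Fintype.linearCombination ℝ a x + c := by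
      ext x
      simp [h, Fintype.linearCombination_apply, mul_comm, add_comm]
    rw [hlin]
    exact ((Fintype.linearCombination ℝ a).concaveOn convex_univ).add_const c
  have hclosed (i) : IsClosed {x | f x = g i x} := isClosed_eq hfc (hgc i)
  have hdense : Dense (⋃ i, interior {x | f x = g i x}) :=
    dense_iUnion_interior_of_closed hclosed (Set.iUnion_eq_univ_iff.2 hcover)
  have hsub : (⋃ i, interior {x | f x = g i x}) ⊆ ⋃ i ∈ J, {x | f x = g i x} := by
    refine Set.iUnion_subset fun i x hx => ?_
    have hi : i ∈ J := (hJ i).2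
      (hf.le_of_eventuallyEq_concaveOn (hconc i) (mem_interior_iff_mem_nhds.1 hx))
    exact Set.mem_biUnion hi (interior_subset hx)
  have hcoverJ (x) : ∃ i ∈ J, f x = g i x := by
    have hx := closure_minimal hsub (J.finite_toSet.isClosed_biUnion fun i _ => hclosed i)
      (hdense x)
    simpa using hx
  obtain ⟨i₀, hi₀, -⟩ := hcoverJ 0
  refine ⟨⟨i₀, hi₀⟩, fun x => le_antisymm ?_ (Finset.sup'_le _ _ fun i hi => (hJ i).1 hi x)⟩
  obtain ⟨i, hi, hx⟩ := hcoverJ x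
  exact hx.trans_le (Finset.le_sup' (fun i => g i x) hi)
end
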